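/- Let u : ℝ → ℝ be twice differentiable on an open interval containing (0,1), with u'' continuous on (0,1), with u continuous on [0,1], such that u''(x)² − (1 + eˣ)·u''(x) + eˣ = 0 for all x ∈ (0,1) and u(0) = u(1) = 0. Then either u(x) = x²/2 − x/2 for all x ∈ [0,1], or u(x) = eˣ − (e − 1)x − 1 for all x ∈ [0,1]. In particular the boundary value problem of Example 1 has exactly the two solutions u₁ and u₂. -/

import Mathlib

theorem aux_zero (w w' : ℝ → ℝ) (hc : ContinuousOn w (Set.Icc 0 1))
    (h1 : ∀ x ∈ Set.Ioo (0 : ℝ) 1, HasDerivAt w (w' x) x)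
    (h2 : ∀ x ∈ Set.Ioo (0 : ℝ) 1, HasDerivAt w' 0 x)
    (h0 : w 0 = 0) (h01 : w 1 = 0) : ∀ x ∈ Set.Icc (0 : ℝ) 1, w x = 0 := by
  intro x hx
  rcases eq_or_lt_of_le hx.1 with h | hx0
  · rw [← h, h0]
  rcases eq_or_lt_of_le hx.2 with h | hx1
  · rw [h, h01]
  obtain ⟨c, hcm, hce⟩ := exists_hasDerivAt_eq_slope w w' hx0
    (hc.mono (Set.Icc_subset_Icc le_rfl hx.2))
    (fun y hy => h1 y ⟨hy.1, hy.2.trans hx1⟩)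
  obtain ⟨d, hdm, hde⟩ := exists_hasDerivAt_eq_slope w w' hx1
    (hc.mono (Set.Icc_subset_Icc hx.1 le_rfl))
    (fun y hy => h1 y ⟨hx0.trans hy.1, hy.2⟩)
  have hcd : c < d := hcm.2.trans hdm.1
  obtain ⟨e, hem, hee⟩ := exists_hasDerivAt_eq_slope w' (fun _ => 0) hcd
    (fun y hy => (h2 y ⟨hcm.1.trans_le hy.1, hy.2.trans_lt hdm.2⟩).continuousAt.continuousWithinAt)
    (fun y hy => h2 y ⟨hcm.1.trans hy.1, hy.2.trans hdm.2⟩)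
  have hdc : d - c ≠ 0 := by linarith
  have hx1' : 1 - x ≠ 0 := by linarith
  have hx0' : x - 0 ≠ 0 := by linarith
  rw [eq_div_iff hdc] at hee
  rw [eq_div_iff hx1'] at hde
  rw [eq_div_iff hx0'] at hce
  have : w' d = w' c := by linarith
  rw [this] at hde
  have h3 : w' c = 0 := by linarith
  rw [h3] at hce
  linarith

theorem example1_exactly_two_solutions (u : ℝ → ℝ) (a b : ℝ)
    (ha : a < 0) (hb : 1 < b)
    (hdiff : ∀ x ∈ Set.Ioo a b, DifferentiableAt ℝ u x)
    (hdiff' : ∀ x ∈ Set.Ioo a b, DifferentiableAt ℝ (deriv u) x)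
    (hcont'' : ContinuousOn (deriv (deriv u)) (Set.Ioo 0 1))
    (hcont : ContinuousOn u (Set.Icc 0 1))
    (heq : ∀ x ∈ Set.Ioo (0 : ℝ) 1,
      (deriv (deriv u) x) ^ 2 - (1 + Real.exp x) * deriv (deriv u) x + Real.exp x = 0)
    (hu0 : u 0 = 0) (hu1 : u 1 = 0) :
    (∀ x ∈ Set.Icc (0 : ℝ) 1, u x = x ^ 2 / 2 - x / 2) ∨
    (∀ x ∈ Set.Icc (0 : ℝ) 1, u x = Real.exp x - (Real.exp 1 - 1) * x - 1) := by
  have hsub : ∀ x ∈ Set.Ioo (0 : ℝ) 1, x ∈ Set.Ioo a b :=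
    fun x hx => ⟨ha.trans hx.1, hx.2.trans hb⟩
  have key : ∀ v v' v'' : ℝ → ℝ, (∀ x, HasDerivAt v (v' x) x) → (∀ x, HasDerivAt v' (v'' x) x) →
      v 0 = 0 → v 1 = 0 → (∀ x ∈ Set.Ioo (0 : ℝ) 1, deriv (deriv u) x = v'' x) →
      ∀ x ∈ Set.Icc (0 : ℝ) 1, u x = v x := by
    intro v v' v'' hv hv' hv0 hv1 h x hx
    have := aux_zero (fun x => u x - v x) (fun x => deriv u x - v' x)
      (hcont.sub fun y _ => (hv y).continuousAt.continuousWithinAt)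
      (fun y hy => (hdiff y (hsub y hy)).hasDerivAt.sub (hv y))
      (fun y hy => by
        have h3 := (hdiff' y (hsub y hy)).hasDerivAt.sub (hv' y)
        rw [h y hy, sub_self] at h3
        exact h3)
      (by simp [hu0, hv0]) (by simp [hu1, hv1]) x hx
    exact sub_eq_zero.mp this
  have hdich := (isPreconnected_Ioo (a := (0 : ℝ)) (b := 1)).eq_or_eq_neg_of_sq_eq
    (f := fun x => 2 * deriv (deriv u) x - (1 + Real.exp x)) (g := fun x => Real.exp x - 1)
    (by fun_prop) (by fun_prop)
    (fun x hx => by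
      have := heq x hx
      simp only [Pi.pow_apply]
      linear_combination 4 * this)
    (fun {x} hx => by
      have := Real.add_one_lt_exp hx.1.ne'
      have := hx.1
      show Real.exp x - 1 ≠ 0
      linarith)
  rcases hdich with h | h
  · right
    refine key (fun x => Real.exp x - (Real.exp 1 - 1) * x - 1)
      (fun x => Real.exp x - (Real.exp 1 - 1)) Real.exp ?_ ?_ (by simp) (by simp) ?_
    · intro x
      simpa using ((Real.hasDerivAt_exp x).sub
        ((hasDerivAt_id x).const_mul (Real.exp 1 - 1))).sub_const 1
    · intro x
      exact (Real.hasDerivAt_exp x).sub_const _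
    · intro x hx
      have := h hx
      simp only at this
      linarith
  · left
    refine key (fun x => x ^ 2 / 2 - x / 2) (fun x => x - 1 / 2) (fun _ => 1) ?_ ?_
      (by simp) (by norm_num) ?_
    · intro x
      have := (((hasDerivAt_id x).pow 2).div_const 2).sub ((hasDerivAt_id x).div_const 2)
      exact this.congr_deriv (by simp)
    · intro x
      exact (hasDerivAt_id x).sub_const _
    · intro x hx
      have := h hx
      simp only [Pi.neg_apply] at this
      linarith
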